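/- arXiv:2006.05449 — 6 statements merged into one kernel-verified Lean document; each statement's English description precedes it below -/
import Mathlib

section
/- Let i be an original instruction with duplicate D(i), and let s_0, s_1, s', s'' be states with F(s_0, i, s') and F(s_1, D(i), s''). If s_0(l) = s_1(c(l)) for every original location l ∈ L_O, then s'(l) = s''(c(l)) for every original location l ∈ L_O. -/
/-!
Executing an instruction according to its specification is a pointwise update of the architectural
state. Along a map `c` that is injective on the original locations, an update at `c l` pulls back
to the update at `l`, and agreement on the input locations makes the two instructions write the same
value.
-/

/-- An instruction: an opcode, an output location and two input locations. -/
structure Instr (L Op : Type*) where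
  op : Op
  out : L
  in1 : L
  in2 : L

/-- A state: an architectural part `L → V` and a non-architectural part `NS`. -/
abbrev PState (V L NS : Type*) := (L → V) × NS

/-- The abstract specification relation `F` induced by the family `f` of opcode
specification functions: all non-output locations are preserved and the output
location gets the value specified by the opcode's specification function. -/
def AbsSpec {V L NS Op : Type*} (f : Op → V → V → V)
    (s : PState V L NS) (i : Instr L Op) (s' : PState V L NS) : Prop :=
  (∀ l, l ≠ i.out → s.1 l = s'.1 l) ∧
    s'.1 i.out = f i.op (s.1 i.in1) (s.1 i.in2)

/-- An original instruction: all its locations lie in the set `O` of original locations. -/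
def IsOrig {L Op : Type*} (O : Set L) (i : Instr L Op) : Prop :=
  i.out ∈ O ∧ i.in1 ∈ O ∧ i.in2 ∈ O

/-- A duplicate instruction: all its locations lie in the set `DL` of duplicate locations. -/
def IsDup {L Op : Type*} (DL : Set L) (i : Instr L Op) : Prop :=
  i.out ∈ DL ∧ i.in1 ∈ DL ∧ i.in2 ∈ DL

/-- The instruction duplication function `D` w.r.t. the location correspondence `c`. -/
def dupI {L Op : Type*} (c : L → L) (i : Instr L Op) : Instr L Op :=
  ⟨i.op, c i.out, c i.in1, c i.in2⟩

/-- QED-consistency of a state: every original location holds the same value as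
its corresponding duplicate location. -/
def QedCons {V L NS : Type*} (O : Set L) (c : L → L) (s : PState V L NS) : Prop :=
  ∀ l ∈ O, s.1 l = s.1 (c l)

open Function Set

/-- The relabelling of the locations of an instruction along a map, which is `dupI` when the map
goes from a type of locations to itself. The target type is arbitrary, so that the two copies of
an instruction may run on different machines. -/
def Instr.map {L L' Op : Type*} (c : L → L') (i : Instr L Op) : Instr L' Op :=
  ⟨i.op, c i.out, c i.in1, c i.in2⟩

section Update

variable {V L L' : Type*} [DecidableEq L] [DecidableEq L']

theorem eqOn_update_update_comp {O : Set L} {c : L → L'} (hc : InjOn c O) {l : L} (hl : l ∈ O)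
    {a : L → V} {b : L' → V} (hab : EqOn a (b ∘ c) O) (v : V) :
    EqOn (update a l v) (update b (c l) v ∘ c) O := by
  intro k hk
  simp only [comp_apply, update_apply, hc.eq_iff hk hl, hab hk]

theorem absSpec_iff_eq_update {NS Op : Type*} {f : Op → V → V → V} {i : Instr L Op}
    {s s' : PState V L NS} :
    AbsSpec f s i s' ↔ s'.1 = update s.1 i.out (f i.op (s.1 i.in1) (s.1 i.in2)) := by
  simp only [AbsSpec, eq_update_iff, and_comm, eq_comm]

end Update

theorem stmt3_general {V L L' NS NS' Op : Type*} {f : Op → V → V → V}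
    {O : Set L} {c : L → L'} (hc : InjOn c O) {i : Instr L Op} (hi : IsOrig O i)
    {s s' : PState V L NS} {t t' : PState V L' NS'}
    (hs : AbsSpec f s i s') (ht : AbsSpec f t (i.map c) t') (hst : EqOn s.1 (t.1 ∘ c) O) :
    EqOn s'.1 (t'.1 ∘ c) O := by
  classical
  obtain ⟨hout, hin1, hin2⟩ := hi
  have value_eq : f i.op (s.1 i.in1) (s.1 i.in2) = f i.op (t.1 (c i.in1)) (t.1 (c i.in2)) :=
    congrArg₂ (f i.op) (hst hin1) (hst hin2)
  rw [absSpec_iff_eq_update.1 hs, absSpec_iff_eq_update.1 ht, value_eq]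
  exact eqOn_update_update_comp hc hout hst _

/-- If an original instruction and its duplicate each execute according to the
specification from states agreeing on all corresponding original/duplicate location
pairs, then the resulting states also agree on all such pairs. -/
theorem stmt3 {V L NS Op : Type*} (f : Op → V → V → V)
    (O DL : Set L) (c : L → L)
    (hpart : ∀ l : L, l ∈ O ↔ l ∉ DL) (hbij : Set.BijOn c O DL)
    (i : Instr L Op) (hOrig : IsOrig O i)
    (s0 s1 s' s'' : PState V L NS)
    (h1 : AbsSpec f s0 i s') (h2 : AbsSpec f s1 (dupI c i) s'')
    (hagree : ∀ l ∈ O, s0.1 l = s1.1 (c l)) :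
    ∀ l ∈ O, s'.1 l = s''.1 (c l) :=
  stmt3_general hbij.injOn hOrig h1 h2 hagree
end

section
/- Let i_1, …, i_n be original instructions, let t = ⟨i_1, …, i_n, D(i_1), …, D(i_n)⟩, and let s_0, …, s_{2n} be states with F(s_{j−1}, t_j, s_j) for every 1 ≤ j ≤ 2n. If s_0 is QED-consistent, then for every 0 ≤ j ≤ n and every original location l ∈ L_O, s_j(l) = s_{n+j}(c(l)). -/
section

variable {V L NS NS' Op : Type*} {f : Op → V → V → V} {O : Set L} {c : L → L}
  {m n : ℕ} {ins : ℕ → Instr L Op} {st : ℕ → PState V L NS} {st' : ℕ → PState V L NS'}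

/-- The states `st 0, …, st n` form an execution of `ins 0, …, ins (n - 1)` according to the
specification; later values of the total functions `ins` and `st` are irrelevant. -/
def IsRun (f : Op → V → V → V) (n : ℕ) (ins : ℕ → Instr L Op) (st : ℕ → PState V L NS) : Prop :=
  ∀ j < n, AbsSpec f (st j) (ins j) (st (j + 1))

/-- The duplicate locations of `s'` mirror the original locations of `s`: the invariant relating
the original and the duplicate half of a QED test. QED-consistency is the case `s' = s`. The two
states may have different non-architectural types, as only their architectural parts matter. -/
def Mirrors (O : Set L) (c : L → L) (s : PState V L NS) (s' : PState V L NS') : Prop :=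
  ∀ l ∈ O, s.1 l = s'.1 (c l)

theorem IsRun.mono (h : IsRun f n ins st) (hmn : m ≤ n) : IsRun f m ins st :=
  fun j hj => h j (hj.trans_le hmn)

theorem IsRun.apply_eq_of_forall_ne_out (h : IsRun f n ins st) {l : L}
    (hl : ∀ j < n, l ≠ (ins j).out) : (st n).1 l = (st 0).1 l := by
  induction n with
  | zero => rfl
  | succ n ih =>
    have hlast : (st n).1 l = (st (n + 1)).1 l := (h n n.lt_succ_self).1 l (hl n n.lt_succ_self)
    exact hlast.symm.trans (ih (h.mono n.le_succ) fun j hj => hl j (hj.trans n.lt_succ_self))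

theorem IsRun.mirrors_of_qedCons (h : IsRun f n ins st) (hc : Set.MapsTo c O Oᶜ)
    (hout : ∀ j < n, (ins j).out ∈ O) (hqed : QedCons O c (st 0)) :
    Mirrors O c (st 0) (st n) := by
  intro l hl
  have hne : ∀ j < n, c l ≠ (ins j).out :=
    fun j hj => (ne_of_mem_of_not_mem (hout j hj) (hc hl)).symm
  exact (hqed l hl).trans (h.apply_eq_of_forall_ne_out hne).symm

theorem Mirrors.of_absSpec_dupI {s₁ s₂ : PState V L NS} {s₁' s₂' : PState V L NS'}
    {i : Instr L Op} (h : Mirrors O c s₁ s₁') (hc : Set.InjOn c O) (hi : IsOrig O i)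
    (hs : AbsSpec f s₁ i s₂) (hs' : AbsSpec f s₁' (dupI c i) s₂') :
    Mirrors O c s₂ s₂' := by
  intro l hl
  obtain ⟨hout, hin1, hin2⟩ := hi
  by_cases hlo : l = i.out
  · subst hlo
    calc s₂.1 i.out = f i.op (s₁.1 i.in1) (s₁.1 i.in2) := hs.2
      _ = f i.op (s₁'.1 (c i.in1)) (s₁'.1 (c i.in2)) := by rw [h _ hin1, h _ hin2]
      _ = s₂'.1 (c i.out) := hs'.2.symm
  · have hclo : c l ≠ c i.out := hc.ne hl hout hlo
    calc s₂.1 l = s₁.1 l := (hs.1 l hlo).symm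
      _ = s₁'.1 (c l) := h l hl
      _ = s₂'.1 (c l) := hs'.1 (c l) hclo

theorem Mirrors.of_isRun_dupI (h₀ : Mirrors O c (st 0) (st' 0)) (hc : Set.InjOn c O)
    (horig : ∀ j < n, IsOrig O (ins j)) (h : IsRun f n ins st)
    (h' : IsRun f n (fun j => dupI c (ins j)) st') :
    Mirrors O c (st n) (st' n) := by
  induction n with
  | zero => exact h₀
  | succ n ih =>
    have hprev : Mirrors O c (st n) (st' n) :=
      ih (fun j hj => horig j (hj.trans n.lt_succ_self)) (h.mono n.le_succ) (h'.mono n.le_succ)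
    exact hprev.of_absSpec_dupI hc (horig n n.lt_succ_self) (h n n.lt_succ_self)
      (h' n n.lt_succ_self)

theorem stmt5_general (hmaps : Set.MapsTo c O Oᶜ) (hinj : Set.InjOn c O)
    (horig : ∀ j < n, IsOrig O (ins j)) (hrun : IsRun f n ins st)
    (hdup : IsRun f n (fun j => dupI c (ins j)) (fun j => st (n + j)))
    (hqed : QedCons O c (st 0)) :
    ∀ j ≤ n, Mirrors O c (st j) (st (n + j)) := by
  intro j hj
  have hstart : Mirrors O c (st 0) (st n) :=
    hrun.mirrors_of_qedCons hmaps (fun k hk => (horig k hk).1) hqed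
  exact hstart.of_isRun_dupI (st' := fun k => st (n + k)) hinj
    (fun k hk => horig k (hk.trans_le hj)) (hrun.mono hj) (hdup.mono hj)

end

/-- Along a QED test `⟨i_1, …, i_n, D(i_1), …, D(i_n)⟩` executed according to the
specification from a QED-consistent state, the value at every original location `l`
after `j` original instructions equals the value at `c l` after `j` duplicate
instructions, for every `0 ≤ j ≤ n`. -/
theorem stmt5 {V L NS Op : Type*} (f : Op → V → V → V)
    (O DL : Set L) (c : L → L)
    (hpart : ∀ l : L, l ∈ O ↔ l ∉ DL) (hbij : Set.BijOn c O DL)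
    (n : ℕ) (ins : ℕ → Instr L Op) (st : ℕ → PState V L NS)
    (horig : ∀ j < n, IsOrig O (ins j))
    (hspec1 : ∀ j < n, AbsSpec f (st j) (ins j) (st (j + 1)))
    (hspec2 : ∀ j < n, AbsSpec f (st (n + j)) (dupI c (ins j)) (st (n + j + 1)))
    (hqed0 : QedCons O c (st 0)) :
    ∀ j ≤ n, ∀ l ∈ O, (st j).1 l = (st (n + j)).1 (c l) := by
  have hmaps : Set.MapsTo c O Oᶜ := fun _ hl hcl => (hpart _).1 hcl (hbij.mapsTo hl)
  exact stmt5_general hmaps hbij.injOn horig hspec1 hspec2 hqed0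
end

section
/- QED-consistency is preserved by QED tests executed according to the specification: let t = ⟨i_1, …, i_n, D(i_1), …, D(i_n)⟩ be a QED test (with i_1, …, i_n original instructions) and let s_0, …, s_{2n} be states with F(s_{j−1}, t_j, s_j) for every 1 ≤ j ≤ 2n. If s_0 is QED-consistent, then s_{2n} is QED-consistent. -/
section Step

variable {V L NS NS' Op : Type*} {f : Op → V → V → V} {i : Instr L Op}
  {s s' : PState V L NS} {t t' : PState V L NS'}

theorem AbsSpec.eqOn_of_out_notMem {A : Set L} (h : AbsSpec f s i s') (hout : i.out ∉ A) :
    Set.EqOn s.1 s'.1 A :=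
  fun l hl => h.1 l (ne_of_mem_of_not_mem hl hout)

theorem AbsSpec.eqOn_comp_dupI {O : Set L} {c : L → L} (hc : Set.InjOn c O) (hi : IsOrig O i)
    (hs : AbsSpec f s i s') (ht : AbsSpec f t (dupI c i) t') (hst : Set.EqOn s.1 (t.1 ∘ c) O) :
    Set.EqOn s'.1 (t'.1 ∘ c) O := by
  obtain ⟨hout, hin1, hin2⟩ := hi
  intro l hl
  by_cases hlout : l = i.out
  · subst hlout
    calc s'.1 i.out = f i.op (s.1 i.in1) (s.1 i.in2) := hs.2
      _ = f i.op (t.1 (c i.in1)) (t.1 (c i.in2)) := congrArg₂ (f i.op) (hst hin1) (hst hin2)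
      _ = t'.1 (c i.out) := ht.2.symm
  · have hclout : c l ≠ c i.out := hc.ne hl hout hlout
    calc s'.1 l = s.1 l := (hs.1 l hlout).symm
      _ = t.1 (c l) := hst hl
      _ = t'.1 (c l) := ht.1 (c l) hclout

end Step

/-- The states `st 0, …, st n` form an execution of the instructions `ins 0, …, ins (n - 1)`
according to the specification. Both sequences are indexed by all of `ℕ`, so that a segment of an
execution is obtained by shifting the index; terms beyond these ranges are irrelevant. -/
def IsSpecRun {V L NS Op : Type*} (f : Op → V → V → V) (ins : ℕ → Instr L Op)
    (st : ℕ → PState V L NS) (n : ℕ) : Prop :=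
  ∀ j < n, AbsSpec f (st j) (ins j) (st (j + 1))

namespace IsSpecRun

variable {V L NS NS' Op : Type*} {f : Op → V → V → V} {ins : ℕ → Instr L Op}
  {st : ℕ → PState V L NS} {st' : ℕ → PState V L NS'} {n : ℕ}

theorem eqOn_of_out_notMem {A : Set L} (h : IsSpecRun f ins st n)
    (hout : ∀ j < n, (ins j).out ∉ A) : Set.EqOn (st 0).1 (st n).1 A := by
  induction n with
  | zero => exact Set.eqOn_refl _ _
  | succ n ih =>
    have hinit : Set.EqOn (st 0).1 (st n).1 A :=
      ih (fun j hj => h j (hj.trans n.lt_succ_self))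
        (fun j hj => hout j (hj.trans n.lt_succ_self))
    exact hinit.trans ((h n n.lt_succ_self).eqOn_of_out_notMem (hout n n.lt_succ_self))

theorem eqOn_comp_dupI {O : Set L} {c : L → L} (hc : Set.InjOn c O)
    (horig : ∀ j < n, IsOrig O (ins j)) (h : IsSpecRun f ins st n)
    (h' : IsSpecRun f (fun j => dupI c (ins j)) st' n)
    (h0 : Set.EqOn (st 0).1 ((st' 0).1 ∘ c) O) :
    Set.EqOn (st n).1 ((st' n).1 ∘ c) O := by
  induction n with
  | zero => exact h0
  | succ n ih =>
    have hinit : Set.EqOn (st n).1 ((st' n).1 ∘ c) O :=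
      ih (fun j hj => horig j (hj.trans n.lt_succ_self))
        (fun j hj => h j (hj.trans n.lt_succ_self))
        (fun j hj => h' j (hj.trans n.lt_succ_self))
    exact (h n n.lt_succ_self).eqOn_comp_dupI hc (horig n n.lt_succ_self)
      (h' n n.lt_succ_self) hinit

end IsSpecRun

theorem stmt6_general {V L NS Op : Type*} {f : Op → V → V → V} {O : Set L} {c : L → L}
    (hdisj : Disjoint O (c '' O)) (hinj : Set.InjOn c O)
    {n : ℕ} {ins : ℕ → Instr L Op} {st : ℕ → PState V L NS}
    (horig : ∀ j < n, IsOrig O (ins j))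
    (hrun : IsSpecRun f ins st n)
    (hdup : IsSpecRun f (fun j => dupI c (ins j)) (fun j => st (n + j)) n)
    (hqed0 : QedCons O c (st 0)) :
    QedCons O c (st (2 * n)) := by
  have hcopies : Set.EqOn (st 0).1 (st n).1 (c '' O) :=
    hrun.eqOn_of_out_notMem fun j hj => hdisj.notMem_of_mem_left (horig j hj).1
  have horiginals : Set.EqOn (st n).1 (st (n + n)).1 O :=
    hdup.eqOn_of_out_notMem fun j hj =>
      hdisj.notMem_of_mem_right (Set.mem_image_of_mem c (horig j hj).1)
  have hstart : Set.EqOn (st 0).1 ((st n).1 ∘ c) O :=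
    Set.EqOn.trans hqed0 (hcopies.comp_right (Set.mapsTo_image c O))
  have hreplay : Set.EqOn (st n).1 ((st (n + n)).1 ∘ c) O :=
    hrun.eqOn_comp_dupI hinj horig hdup hstart
  rw [two_mul]
  exact horiginals.symm.trans hreplay

/-- QED-consistency is preserved by QED tests executed according to the
specification: executing `⟨i_1, …, i_n, D(i_1), …, D(i_n)⟩` according to the
specification from a QED-consistent state yields a QED-consistent final state. -/
theorem stmt6 {V L NS Op : Type*} (f : Op → V → V → V)
    (O DL : Set L) (c : L → L)
    (hpart : ∀ l : L, l ∈ O ↔ l ∉ DL) (hbij : Set.BijOn c O DL)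
    (n : ℕ) (ins : ℕ → Instr L Op) (st : ℕ → PState V L NS)
    (horig : ∀ j < n, IsOrig O (ins j))
    (hspec1 : ∀ j < n, AbsSpec f (st j) (ins j) (st (j + 1)))
    (hspec2 : ∀ j < n, AbsSpec f (st (n + j)) (dupI c (ins j)) (st (n + j + 1)))
    (hqed0 : QedCons O c (st 0)) :
    QedCons O c (st (2 * n)) := by
  have hdisj : Disjoint O (c '' O) :=
    hbij.image_eq ▸ Set.disjoint_left.2 fun l => (hpart l).1
  exact stmt6_general hdisj hbij.injOn horig hspec1 hspec2 hqed0
end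

section
/- Soundness of SQED: if the processor is QED-inconsistent (some QED test fails), then for every family of opcode specification functions f_op the processor is not correct with respect to the induced abstract specification relation F. -/
/-- `δ*`: run an instruction sequence from a state via the transition function `δ`. -/
def runP {V L NS Op : Type*} (δ : PState V L NS → Instr L Op → PState V L NS)
    (s : PState V L NS) (t : List (Instr L Op)) : PState V L NS :=
  t.foldl δ s

/-- A state is reachable if it is obtained by running some instruction sequence
from some initial state (a state whose non-architectural part is `σ0`). -/
def Reach {V L NS Op : Type*} (δ : PState V L NS → Instr L Op → PState V L NS)
    (σ0 : NS) (s : PState V L NS) : Prop :=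
  ∃ (s0 : PState V L NS) (t : List (Instr L Op)), s0.2 = σ0 ∧ runP δ s0 t = s

/-- Correctness: every instruction executes according to the abstract
specification in every reachable state. -/
def CorrectP {V L NS Op : Type*} (f : Op → V → V → V)
    (δ : PState V L NS → Instr L Op → PState V L NS) (σ0 : NS) : Prop :=
  ∀ (i : Instr L Op) (s : PState V L NS), Reach δ σ0 s → AbsSpec f s i (δ s i)

/-!
Suppose the processor is correct, and let `s₁` be the state after running the original sequence
`a` from a QED-consistent state `s₀`, and `s₂` the state after then running `D(a)`. Original
instructions do not write to duplicate locations, so the duplicate part of `s₁` is that of `s₀`,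
which matches the original part of `s₀` by consistency. Hence running `a` from `s₀` and `D(a)`
from `s₁` proceed in lockstep, and the duplicate part of `s₂` matches the original part of `s₁`.
Duplicate instructions do not write to original locations, so this is also the original part
of `s₂`, and `s₂` is QED-consistent.
-/

section

variable {V L NS Op : Type*} {f : Op → V → V → V}
  {δ : PState V L NS → Instr L Op → PState V L NS} {σ0 : NS} {s s' t t' : PState V L NS}
  {i : Instr L Op} {a : List (Instr L Op)} {S O DL : Set L} {c : L → L}

theorem runP_append (δ : PState V L NS → Instr L Op → PState V L NS) (s : PState V L NS)
    (a b : List (Instr L Op)) : runP δ s (a ++ b) = runP δ (runP δ s a) b :=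
  List.foldl_append

theorem reach_of_snd_eq (δ : PState V L NS → Instr L Op → PState V L NS) (hs : s.2 = σ0) :
    Reach δ σ0 s :=
  ⟨s, [], hs, rfl⟩

theorem Reach.runP (hs : Reach δ σ0 s) (a : List (Instr L Op)) :
    Reach δ σ0 (runP δ s a) := by
  obtain ⟨s₀, b, hs₀, rfl⟩ := hs
  exact ⟨s₀, b ++ a, hs₀, runP_append δ s₀ b a⟩

theorem Reach.step (hs : Reach δ σ0 s) (i : Instr L Op) : Reach δ σ0 (δ s i) :=
  hs.runP [i]

theorem IsOrig.isDup_dupI (hi : IsOrig O i) (hmaps : Set.MapsTo c O DL) :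
    IsDup DL (dupI c i) :=
  ⟨hmaps hi.1, hmaps hi.2.1, hmaps hi.2.2⟩

theorem qedCons_iff_eqOn : QedCons O c s ↔ Set.EqOn s.1 (s.1 ∘ c) O :=
  Iff.rfl

theorem AbsSpec.eqOn_of_out_notMem_s7 (h : AbsSpec f s i t) (hi : i.out ∉ S) :
    Set.EqOn t.1 s.1 S :=
  fun l hl => (h.1 l (ne_of_mem_of_not_mem hl hi)).symm

theorem AbsSpec.eqOn_comp_of_dupI (h : AbsSpec f s i t) (h' : AbsSpec f s' (dupI c i) t')
    (hinj : Set.InjOn c O) (hi : IsOrig O i) (hss' : Set.EqOn s.1 (s'.1 ∘ c) O) :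
    Set.EqOn t.1 (t'.1 ∘ c) O := by
  intro l hl
  obtain ⟨hout, hin1, hin2⟩ := hi
  by_cases hlo : l = i.out
  · subst hlo
    calc t.1 i.out = f i.op (s.1 i.in1) (s.1 i.in2) := h.2
      _ = f i.op (s'.1 (c i.in1)) (s'.1 (c i.in2)) := congrArg₂ _ (hss' hin1) (hss' hin2)
      _ = t'.1 (c i.out) := h'.2.symm
  · have hclo : c l ≠ c i.out := hinj.ne hl hout hlo
    calc t.1 l = s.1 l := (h.1 l hlo).symm
      _ = s'.1 (c l) := hss' hl
      _ = t'.1 (c l) := h'.1 (c l) hclo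

theorem CorrectP.eqOn_runP_of_out_notMem (hc : CorrectP f δ σ0) (hs : Reach δ σ0 s)
    (ha : ∀ i ∈ a, i.out ∉ S) : Set.EqOn (runP δ s a).1 s.1 S := by
  induction a generalizing s with
  | nil => exact Set.eqOn_refl _ _
  | cons i a ih =>
    obtain ⟨hi, ha⟩ := List.forall_mem_cons.1 ha
    exact (ih (hs.step i) ha).trans ((hc i s hs).eqOn_of_out_notMem_s7 hi)

theorem CorrectP.eqOn_runP_comp_runP_map_dupI (hc : CorrectP f δ σ0) (hs : Reach δ σ0 s)
    (hs' : Reach δ σ0 s') (hinj : Set.InjOn c O) (ha : ∀ i ∈ a, IsOrig O i)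
    (hss' : Set.EqOn s.1 (s'.1 ∘ c) O) :
    Set.EqOn (runP δ s a).1 ((runP δ s' (a.map (dupI c))).1 ∘ c) O := by
  induction a generalizing s s' with
  | nil => exact hss'
  | cons i a ih =>
    obtain ⟨hi, ha⟩ := List.forall_mem_cons.1 ha
    exact ih (hs.step i) (hs'.step (dupI c i)) ha
      ((hc i s hs).eqOn_comp_of_dupI (hc (dupI c i) s' hs') hinj hi hss')

theorem CorrectP.eqOn_runP_of_isOrig (hc : CorrectP f δ σ0) (hs : Reach δ σ0 s)
    (hdisj : Disjoint O DL) (ha : ∀ i ∈ a, IsOrig O i) : Set.EqOn (runP δ s a).1 s.1 DL :=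
  hc.eqOn_runP_of_out_notMem hs fun i hi => hdisj.notMem_of_mem_left (ha i hi).1

theorem CorrectP.eqOn_runP_of_isDup (hc : CorrectP f δ σ0) (hs : Reach δ σ0 s)
    (hdisj : Disjoint O DL) (ha : ∀ i ∈ a, IsDup DL i) : Set.EqOn (runP δ s a).1 s.1 O :=
  hc.eqOn_runP_of_out_notMem hs fun i hi => hdisj.notMem_of_mem_right (ha i hi).1

end

theorem stmt7_general {V L NS Op : Type*}
    (δ : PState V L NS → Instr L Op → PState V L NS) (σ0 : NS)
    (O DL : Set L) (c : L → L)
    (hdisj : Disjoint O DL) (hmaps : Set.MapsTo c O DL) (hinj : Set.InjOn c O)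
    (hincons : ∃ (a : List (Instr L Op)) (s : PState V L NS),
      (∀ i ∈ a, IsOrig O i) ∧ Reach δ σ0 s ∧ QedCons O c s ∧
        ¬ QedCons O c (runP δ s (a ++ a.map (dupI c)))) :
    ∀ f : Op → V → V → V, ¬ CorrectP f δ σ0 := by
  intro f hc
  obtain ⟨a, s₀, ha, hs₀, hcons, hfail⟩ := hincons
  refine hfail ?_
  rw [runP_append, qedCons_iff_eqOn]
  set s₁ := runP δ s₀ a
  set s₂ := runP δ s₁ (a.map (dupI c))
  have hs₁ : Reach δ σ0 s₁ := hs₀.runP a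
  have hdup : ∀ i ∈ a.map (dupI c), IsDup DL i :=
    List.forall_mem_map.2 fun i hi => (ha i hi).isDup_dupI hmaps
  have h₁₀ : Set.EqOn s₁.1 s₀.1 DL := hc.eqOn_runP_of_isOrig hs₀ hdisj ha
  have h₀₁ : Set.EqOn s₀.1 (s₁.1 ∘ c) O :=
    (qedCons_iff_eqOn.1 hcons).trans (h₁₀.symm.comp_right hmaps)
  have h₁₂ : Set.EqOn s₁.1 (s₂.1 ∘ c) O :=
    hc.eqOn_runP_comp_runP_map_dupI hs₀ hs₁ hinj ha h₀₁
  have h₂₁ : Set.EqOn s₂.1 s₁.1 O := hc.eqOn_runP_of_isDup hs₁ hdisj hdup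
  exact h₂₁.trans h₁₂

/-- Soundness of SQED: if some QED test fails (the processor is QED-inconsistent),
then for every family of opcode specification functions `f` the processor is not
correct with respect to the induced abstract specification relation. -/
theorem stmt7 {V L NS Op : Type*}
    (δ : PState V L NS → Instr L Op → PState V L NS) (σ0 : NS)
    (O DL : Set L) (c : L → L)
    (hpart : ∀ l : L, l ∈ O ↔ l ∉ DL) (hbij : Set.BijOn c O DL)
    (hincons : ∃ (a : List (Instr L Op)) (s0 : PState V L NS),
      (∀ i ∈ a, IsOrig O i) ∧ s0.2 = σ0 ∧ QedCons O c s0 ∧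
        ¬ QedCons O c (runP δ s0 (a ++ a.map (dupI c)))) :
    ∀ f : Op → V → V → V, ¬ CorrectP f δ σ0 := by
  obtain ⟨a, s0, ha, hs0, hcons, hfail⟩ := hincons
  exact stmt7_general δ σ0 O DL c (Set.disjoint_left.2 fun l => (hpart l).1) hbij.mapsTo hbij.injOn
    ⟨a, s0, ha, reach_of_snd_eq δ hs0, hcons, hfail⟩
end

section
/- QED-consistency is preserved by extended QED tests executed according to the specification: let t be an instruction sequence obtained from a QED test ⟨i_1, …, i_n, D(i_1), …, D(i_n)⟩ (with i_1, …, i_n original instructions) by inserting zero or more no-operation instructions anywhere in the sequence, and let s_0, …, s_m be states such that for each step j, either t_j is one of the inserted no-operation instructions and s_j = δ(s_{j−1}, t_j), or t_j is one of the QED-test instructions and F(s_{j−1}, t_j, s_j). If s_0 is QED-consistent, then s_m is QED-consistent. -/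
/-- A no-operation instruction: executing it never changes the architectural part
of the state. -/
def IsNop {V L NS Op : Type*} (δ : PState V L NS → Instr L Op → PState V L NS)
    (i : Instr L Op) : Prop :=
  ∀ s : PState V L NS, (δ s i).1 = s.1

/-- `ExtRun f δ t s s'` holds iff starting from `s` one can execute the
instructions of `t` in order, with zero or more no-operation instructions inserted
anywhere (each inserted no-operation executed via `δ`, and each instruction of `t`
executed according to the specification `AbsSpec f`), reaching `s'`. -/
inductive ExtRun {V L NS Op : Type*} (f : Op → V → V → V)
    (δ : PState V L NS → Instr L Op → PState V L NS) :
    List (Instr L Op) → PState V L NS → PState V L NS → Prop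
  | nil (s : PState V L NS) : ExtRun f δ [] s s
  | step {i : Instr L Op} {t : List (Instr L Op)} {s s' s'' : PState V L NS} :
      AbsSpec f s i s' → ExtRun f δ t s' s'' → ExtRun f δ (i :: t) s s''
  | nop {i : Instr L Op} {t : List (Instr L Op)} {s s'' : PState V L NS} :
      IsNop δ i → ExtRun f δ t (δ s i) s'' → ExtRun f δ t s s''

section ArchRun

variable {V L Op : Type*} [DecidableEq L]

/-- The effect on the architectural state that the specification relation `F` prescribes for one
instruction. As a function on architectural states alone, it lets the two halves of a test be
compared step by step, whatever no-operations were inserted into each. -/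
def archStep (f : Op → V → V → V) (x : L → V) (i : Instr L Op) : L → V :=
  Function.update x i.out (f i.op (x i.in1) (x i.in2))

/-- The architectural state in which the specification relation `F` leaves an instruction sequence
started at `x`: the semantics of a test without inserted no-operations. The state comes last, so
that `archRun f t` is a state transformer. -/
def archRun (f : Op → V → V → V) (t : List (Instr L Op)) (x : L → V) : L → V :=
  t.foldl (archStep f) x

theorem archStep_out (f : Op → V → V → V) (x : L → V) (i : Instr L Op) :
    archStep f x i i.out = f i.op (x i.in1) (x i.in2) :=
  Function.update_self ..

theorem archStep_of_ne (f : Op → V → V → V) (x : L → V) {i : Instr L Op} {l : L}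
    (h : l ≠ i.out) : archStep f x i l = x l :=
  Function.update_of_ne h ..

theorem archRun_append (f : Op → V → V → V) (t u : List (Instr L Op)) (x : L → V) :
    archRun f (t ++ u) x = archRun f u (archRun f t x) :=
  List.foldl_append

theorem AbsSpec.eq_archStep {NS : Type*} {f : Op → V → V → V} {s s' : PState V L NS}
    {i : Instr L Op} (h : AbsSpec f s i s') : s'.1 = archStep f s.1 i :=
  Function.eq_update_iff.2 ⟨h.2, fun l hl => (h.1 l hl).symm⟩

theorem ExtRun.eq_archRun {NS : Type*} {f : Op → V → V → V}
    {δ : PState V L NS → Instr L Op → PState V L NS} {t : List (Instr L Op)}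
    {s s' : PState V L NS} (h : ExtRun f δ t s s') : s'.1 = archRun f t s.1 := by
  induction h with
  | nil s => rfl
  | step hspec _ ih => rw [ih, hspec.eq_archStep]; rfl
  | nop hnop _ ih => rw [ih, hnop]

theorem archRun_eqOn_of_forall_out_notMem (f : Op → V → V → V) {S : Set L}
    {t : List (Instr L Op)} (ht : ∀ i ∈ t, i.out ∉ S) (x : L → V) :
    Set.EqOn (archRun f t x) x S := by
  induction t generalizing x with
  | nil => exact Set.eqOn_refl x S
  | cons i t ih =>
    obtain ⟨hi, ht⟩ := List.forall_mem_cons.1 ht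
    have hstep : Set.EqOn (archStep f x i) x S := fun l hl =>
      archStep_of_ne f x (ne_of_mem_of_not_mem hl hi)
    exact (ih ht (archStep f x i)).trans hstep

theorem archStep_eqOn_dupI (f : Op → V → V → V) {O : Set L} {c : L → L} (hc : Set.InjOn c O)
    {i : Instr L Op} (hi : IsOrig O i) {x y : L → V} (hxy : Set.EqOn x (y ∘ c) O) :
    Set.EqOn (archStep f x i) (archStep f y (dupI c i) ∘ c) O := by
  obtain ⟨hout, hin1, hin2⟩ := hi
  intro l hl
  by_cases hlo : l = i.out
  · subst hlo
    calc archStep f x i i.out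
        = f i.op (x i.in1) (x i.in2) := archStep_out f x i
      _ = f i.op (y (c i.in1)) (y (c i.in2)) := congrArg₂ _ (hxy hin1) (hxy hin2)
      _ = archStep f y (dupI c i) (c i.out) := (archStep_out f y (dupI c i)).symm
  · calc archStep f x i l
        = x l := archStep_of_ne f x hlo
      _ = y (c l) := hxy hl
      _ = archStep f y (dupI c i) (c l) := (archStep_of_ne f y (hc.ne hl hout hlo)).symm

theorem archRun_eqOn_map_dupI (f : Op → V → V → V) {O : Set L} {c : L → L} (hc : Set.InjOn c O)
    {a : List (Instr L Op)} (ha : ∀ i ∈ a, IsOrig O i) {x y : L → V}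
    (hxy : Set.EqOn x (y ∘ c) O) :
    Set.EqOn (archRun f a x) (archRun f (a.map (dupI c)) y ∘ c) O := by
  induction a generalizing x y with
  | nil => exact hxy
  | cons i a ih =>
    obtain ⟨hi, ha⟩ := List.forall_mem_cons.1 ha
    exact ih ha (archStep_eqOn_dupI f hc hi hxy)

end ArchRun

theorem stmt11_general {V L NS Op : Type*} {f : Op → V → V → V}
    {δ : PState V L NS → Instr L Op → PState V L NS} {O : Set L} {c : L → L}
    (hmaps : Set.MapsTo c O Oᶜ) (hinj : Set.InjOn c O)
    {a : List (Instr L Op)} (horig : ∀ i ∈ a, IsOrig O i) {s s' : PState V L NS}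
    (hrun : ExtRun f δ (a ++ a.map (dupI c)) s s') (hqed : QedCons O c s) :
    QedCons O c s' := by
  classical
  set y := archRun f a s.1
  have hfinal : s'.1 = archRun f (a.map (dupI c)) y := by
    rw [hrun.eq_archRun, archRun_append]
  have hkeepDup : Set.EqOn y s.1 Oᶜ :=
    archRun_eqOn_of_forall_out_notMem f (fun i hi => not_not_intro (horig i hi).1) s.1
  have hdupOut : ∀ i ∈ a.map (dupI c), i.out ∉ O :=
    List.forall_mem_map.2 fun i hi => hmaps (horig i hi).1
  have hkeepOrig : Set.EqOn (archRun f (a.map (dupI c)) y) y O :=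
    archRun_eqOn_of_forall_out_notMem f hdupOut y
  have hinputs : Set.EqOn s.1 (y ∘ c) O := fun l hl =>
    (hqed l hl).trans (hkeepDup (hmaps hl)).symm
  have hmirror : Set.EqOn y (archRun f (a.map (dupI c)) y ∘ c) O :=
    archRun_eqOn_map_dupI f hinj horig hinputs
  intro l hl
  rw [hfinal]
  exact (hkeepOrig.trans hmirror) hl

/-- QED-consistency is preserved by extended QED tests: executing a QED test
`a ++ D(a)` with zero or more no-operation instructions inserted anywhere, where
each inserted no-op takes a `δ`-step and each QED-test instruction executes
according to the specification, yields a QED-consistent final state when started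
in a QED-consistent state. -/
theorem stmt11 {V L NS Op : Type*} (f : Op → V → V → V)
    (δ : PState V L NS → Instr L Op → PState V L NS)
    (O DL : Set L) (c : L → L)
    (hpart : ∀ l : L, l ∈ O ↔ l ∉ DL) (hbij : Set.BijOn c O DL)
    (a : List (Instr L Op)) (horig : ∀ i ∈ a, IsOrig O i)
    (s s' : PState V L NS)
    (hrun : ExtRun f δ (a ++ a.map (dupI c)) s s')
    (hqed : QedCons O c s) :
    QedCons O c s' := by
  have hmaps : Set.MapsTo c O Oᶜ := fun _ hl hcl => (hpart _).1 hcl (hbij.mapsTo hl)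
  exact stmt11_general hmaps hbij.injOn horig hrun hqed
end

section
/- If the processor is not correct with respect to F and is single-instruction correct with respect to F, then there exist k ≥ 2, an initial state s_0, and an instruction sequence ⟨i_1, …, i_k⟩ whose path s_1, …, s_k from s_0 satisfies F(s_{j−1}, i_j, s_j) for all 1 ≤ j ≤ k−1 and ¬F(s_{k−1}, i_k, s_k); that is, every specification violation of a single-instruction-correct but incorrect processor is triggered by a sequence of at least two instructions from some initial state, and one can choose a triggering sequence all of whose proper prefix steps execute according to F. -/
/-!
Take an initial state and a sequence whose last step violates the specification, and cut the
sequence at its first violating step. That step is not the first of the sequence, because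
single-instruction correctness makes every step from an initial state obey the specification.
-/

section Conforms

variable {S I : Type*} {F : S → I → S → Prop} {δ : S → I → S} {s : S} {l : List I} {i : I}

/-- Conformance of an instruction sequence `l = ⟨i_1, …, i_n⟩` run from `s`: every step of the path
`s_1, …, s_n` satisfies the specification `F`. The state `s_j` is encoded as the result of running
the first `j` elements of `l`, and the step from `s_j` executes `l[j]` (indexing starts at `0`). -/
def Conforms (F : S → I → S → Prop) (δ : S → I → S) (s : S) (l : List I) : Prop :=
  ∀ (j : ℕ) (h : j < l.length), F ((l.take j).foldl δ s) l[j] ((l.take (j + 1)).foldl δ s)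

theorem conforms_nil : Conforms F δ s [] :=
  fun _ h => absurd h (Nat.not_lt_zero _)

theorem conforms_concat :
    Conforms F δ s (l ++ [i]) ↔
      Conforms F δ s l ∧ F (l.foldl δ s) i (δ (l.foldl δ s) i) := by
  have step_of_lt {j : ℕ} (h : j < l.length) (h' : j < (l ++ [i]).length) :
      F (((l ++ [i]).take j).foldl δ s) (l ++ [i])[j] (((l ++ [i]).take (j + 1)).foldl δ s) ↔
        F ((l.take j).foldl δ s) l[j] ((l.take (j + 1)).foldl δ s) := by
    rw [List.take_append_of_le_length h.le, List.take_append_of_le_length h,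
      List.getElem_append_left h]
  have step_last (h : l.length < (l ++ [i]).length) :
      F (((l ++ [i]).take l.length).foldl δ s) (l ++ [i])[l.length]
          (((l ++ [i]).take (l.length + 1)).foldl δ s) ↔
        F (l.foldl δ s) i (δ (l.foldl δ s) i) := by
    rw [List.take_left, List.getElem_concat_length rfl, List.take_of_length_le (by simp),
      List.foldl_concat]
  have length_lt : l.length < (l ++ [i]).length := by simp
  constructor
  · exact fun hli => ⟨fun j h => (step_of_lt h (h.trans length_lt)).1 (hli j _),
      (step_last length_lt).1 (hli _ _)⟩
  · rintro ⟨hl, hi⟩ j hj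
    have le_length : j ≤ l.length := by simpa using hj
    obtain h | rfl := le_length.lt_or_eq
    · exact (step_of_lt h hj).2 (hl j h)
    · exact (step_last hj).2 hi

theorem exists_conforms_and_not_step (hl : ¬ Conforms F δ s l) :
    ∃ (p : List I) (i : I), Conforms F δ s p ∧ ¬ F (p.foldl δ s) i (δ (p.foldl δ s) i) := by
  induction l using List.reverseRecOn with
  | nil => exact absurd conforms_nil hl
  | append_singleton l i ih =>
    by_cases hc : Conforms F δ s l
    · exact ⟨l, i, hc, fun hi => hl (conforms_concat.2 ⟨hc, hi⟩)⟩
    · exact ih hc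

end Conforms

theorem stmt15_general {S I : Type*} (F : S → I → S → Prop) (δ : S → I → S) (init : Set S)
    (hSI : ∀ (i : I), ∀ s0 ∈ init, F s0 i (δ s0 i))
    (hnc : ¬ ∀ (i : I) (s : S),
      (∃ (s0 : S) (t : List I), s0 ∈ init ∧ t.foldl δ s0 = s) → F s i (δ s i)) :
    ∃ (s0 : S) (l : List I) (i : I), s0 ∈ init ∧ 1 ≤ l.length ∧ Conforms F δ s0 l ∧
      ¬ F (l.foldl δ s0) i (δ (l.foldl δ s0) i) := by
  push Not at hnc
  obtain ⟨i, _, ⟨s0, t, h0, rfl⟩, hi⟩ := hnc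
  have not_conforms : ¬ Conforms F δ s0 (t ++ [i]) := fun h => hi (conforms_concat.1 h).2
  obtain ⟨l, k, hl, hk⟩ := exists_conforms_and_not_step not_conforms
  have l_ne_nil : l ≠ [] := by
    rintro rfl
    exact hk (hSI k s0 h0)
  exact ⟨s0, l, k, h0, List.length_pos_of_ne_nil l_ne_nil, hl, hk⟩

/-- In a single-instruction correct but incorrect processor, some specification
violation is triggered by a sequence `⟨i_1, …, i_k⟩` of `k ≥ 2` instructions from
some initial state, all of whose proper prefix steps execute according to the
specification while the last step violates it. Here the sequence is `l ++ [i]`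
with `k = l.length + 1`. -/
theorem stmt15 {V L NS Op : Type*} (f : Op → V → V → V)
    (δ : PState V L NS → Instr L Op → PState V L NS) (σ0 : NS)
    (hSI : ∀ (i : Instr L Op) (s0 : PState V L NS), s0.2 = σ0 → AbsSpec f s0 i (δ s0 i))
    (hnc : ¬ CorrectP f δ σ0) :
    ∃ (s0 : PState V L NS) (l : List (Instr L Op)) (i : Instr L Op),
      s0.2 = σ0 ∧ 1 ≤ l.length ∧
      (∀ (j : ℕ) (h : j < l.length),
        AbsSpec f (runP δ s0 (l.take j)) (l.get ⟨j, h⟩) (runP δ s0 (l.take (j + 1)))) ∧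
      ¬ AbsSpec f (runP δ s0 l) i (δ (runP δ s0 l) i) :=
  stmt15_general (AbsSpec f) δ {s | s.2 = σ0} hSI hnc
end
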